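/- Let k be an algebraically closed field and n ≥ 1. Let w ∈ S_n be of minimal Coxeter length (number of inversions) in its conjugacy class, and let λ be the cycle type of w, a partition of n. Then: (1) there exists a unipotent matrix u ∈ B P_w B ⊆ GL_n(k) whose Jordan type is λ (i.e. rank((u−1)^m) = Σ_j max(λ_j − m, 0) for all m ≥ 1); and (2) every unipotent matrix g ∈ B P_w B satisfies rank((g−1)^m) ≥ Σ_j max(λ_j − m, 0) for all m ≥ 1, i.e. the conjugacy class of Jordan type λ lies in the closure of the conjugacy class of g. (The case G = GL_n of the theorem that the map Φ from conjugacy classes in the Weyl group to unipotent classes is the identity map under the identification of both sides with partitions of n.) -/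

import Mathlib

/-- A square matrix is upper triangular if all entries below the diagonal vanish. -/
def IsUpperTriangular {k : Type*} [Field k] {n : ℕ} (A : Matrix (Fin n) (Fin n) k) : Prop :=
  ∀ i j : Fin n, j < i → A i j = 0

/-- The permutation matrix of `σ`, with `(P_σ)_{i,j} = 1` if `i = σ j` and `0` otherwise. -/
def permMat {k : Type*} [Field k] {n : ℕ} (σ : Equiv.Perm (Fin n)) :
    Matrix (Fin n) (Fin n) k :=
  Matrix.of fun i j => if i = σ j then 1 else 0

/-- The `(B,B)`-double coset `B A B` of a matrix `A`, where `B` is the group of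
invertible upper triangular matrices. -/
def doubleCoset {k : Type*} [Field k] {n : ℕ} (A : Matrix (Fin n) (Fin n) k) :
    Set (Matrix (Fin n) (Fin n) k) :=
  {M | ∃ b₁ b₂ : Matrix (Fin n) (Fin n) k, IsUpperTriangular b₁ ∧ IsUpperTriangular b₂ ∧
    IsUnit b₁.det ∧ IsUnit b₂.det ∧ M = b₁ * A * b₂}

/-- The number of inversions of a permutation `σ` (its Coxeter length in `S_n`). -/
def invCount {n : ℕ} (σ : Equiv.Perm (Fin n)) : ℕ :=
  (Finset.univ.filter fun p : Fin n × Fin n => p.1 < p.2 ∧ σ p.2 < σ p.1).card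

/-- `Σ_j max(λ_j - m, 0)`, where `λ` is the cycle type (with fixed points included, so a
partition of `n`) of the permutation `w`; this is `rank ((u-1)^m)` for a unipotent `u`
of Jordan type `λ`. -/
def expectedRank {n : ℕ} (w : Equiv.Perm (Fin n)) (m : ℕ) : ℕ :=
  ((Equiv.Perm.partition w).parts.map fun p => p - m).sum

section Helpers

open Equiv Finset

/-- Elements of a finite set having at least `m` larger elements in the set. -/
lemma card_filter_above {n : ℕ} (m : ℕ) (S : Finset (Fin n)) :
    (S.filter fun x => m ≤ (S.filter fun y => x < y).card).card = S.card - m := by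
  induction S using Finset.induction_on_min with
  | empty => simp
  | insert a s ha ih =>
    have hn : a ∉ s := fun h => lt_irrefl _ (ha a h)
    have h1 : ∀ x ∈ s, ((insert a s).filter fun y => x < y) = s.filter fun y => x < y := by
      intro x hx
      rw [Finset.filter_insert, if_neg (not_lt.2 (ha x hx).le)]
    have h2 : ((insert a s).filter fun y => a < y) = s := by
      rw [Finset.filter_insert, if_neg (lt_irrefl _)]
      exact Finset.filter_true_of_mem ha
    have h3 : (s.filter fun x => m ≤ ((insert a s).filter fun y => x < y).card)
        = s.filter fun x => m ≤ (s.filter fun y => x < y).card := by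
      apply Finset.filter_congr
      intro x hx
      rw [h1 x hx]
    rw [Finset.filter_insert, h2, h3, Finset.card_insert_of_notMem hn]
    split_ifs with h
    · rw [Finset.card_insert_of_notMem (fun h' => hn (Finset.mem_filter.1 h').1), ih]
      omega
    · rw [ih]; omega

open Classical in
lemma expectedRank_eq {n : ℕ} (w : Perm (Fin n)) (m : ℕ) (hm : 1 ≤ m) :
    expectedRank w m =
      (univ.filter fun x : Fin n => m ≤ (univ.filter fun y => w.SameCycle x y ∧ x < y).card).card := by
  unfold expectedRank
  rw [Perm.parts_partition, Multiset.map_add, Multiset.sum_add, Multiset.map_replicate,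
    Multiset.sum_replicate, Nat.sub_eq_zero_of_le hm, smul_zero, add_zero, Perm.cycleType_def,
    Multiset.map_map]
  have hmaps : ∀ x ∈ (univ.filter fun x : Fin n =>
      m ≤ (univ.filter fun y => w.SameCycle x y ∧ x < y).card), w.cycleOf x ∈ w.cycleFactorsFinset := by
    intro x hx
    rw [Perm.cycleOf_mem_cycleFactorsFinset_iff, Perm.mem_support]
    intro hfix
    have hx := (Finset.mem_filter.1 hx).2
    have : (univ.filter fun y => w.SameCycle x y ∧ x < y) = ∅ := by
      apply Finset.filter_false_of_mem
      rintro y - ⟨⟨i, hi⟩, hlt⟩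
      rw [Perm.zpow_apply_eq_self_of_apply_eq_self hfix] at hi
      exact hlt.ne hi
    rw [this] at hx
    simp at hx; omega
  rw [Finset.card_eq_sum_card_fiberwise hmaps]
  change ∑ c ∈ w.cycleFactorsFinset, _ = _
  apply Finset.sum_congr rfl
  intro c hc
  simp only [Function.comp]
  rw [← card_filter_above m c.support]
  congr 1
  ext x
  simp only [Finset.mem_filter, Finset.mem_univ, true_and]
  have key : ∀ x, x ∈ c.support → (c.support.filter fun y => x < y) =
      (univ.filter fun y => w.SameCycle x y ∧ x < y) := by
    intro x hx
    have := Perm.cycle_is_cycleOf hx hc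
    have hxs : x ∈ w.support := Perm.mem_cycleFactorsFinset_support_le hc hx
    ext y
    rw [Finset.mem_filter, Finset.mem_filter, this, Perm.mem_support_cycleOf_iff]
    simp [hxs]
  constructor
  · rintro ⟨hx, h⟩
    rw [key x hx] at h
    exact ⟨h, (Perm.cycle_is_cycleOf hx hc).symm⟩
  · rintro ⟨h, rfl⟩
    have hx : x ∈ (w.cycleOf x).support := by
      rw [Perm.mem_support_cycleOf_iff]
      exact ⟨Perm.SameCycle.refl _ _, Perm.cycleOf_mem_cycleFactorsFinset_iff.1 hc⟩
    refine ⟨hx, ?_⟩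
    rwa [key x hx]

open Classical in
/-- Some conjugate of `w` has at most `expectedRank w 1` inversions. -/
lemma exists_short_conj {n : ℕ} (w : Perm (Fin n)) :
    ∃ v, IsConj w v ∧ invCount v ≤ expectedRank w 1 := by
  have hne : ∀ x, (univ.filter fun y => w.SameCycle x y).Nonempty := fun x =>
    ⟨x, by simp [Perm.SameCycle.refl]⟩
  let M : Fin n → Fin n := fun x => (univ.filter fun y => w.SameCycle x y).max' (hne x)
  have hM1 : ∀ x, w.SameCycle x (M x) := fun x =>
    (Finset.mem_filter.1 (Finset.max'_mem _ (hne x))).2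
  have hM2 : ∀ x y, w.SameCycle x y → y ≤ M x := fun x y h =>
    Finset.le_max' _ _ (Finset.mem_filter.2 ⟨Finset.mem_univ _, h⟩)
  have hM3 : ∀ x y, w.SameCycle x y → M x = M y := fun x y h =>
    le_antisymm (hM2 _ _ (h.symm.trans (hM1 x))) (hM2 _ _ (h.trans (hM1 y)))
  have hMw : ∀ x, M (w x) = M x := fun x =>
    (hM3 _ _ (Perm.sameCycle_apply_right.2 (Perm.SameCycle.refl w x))).symm
  have hex : ∀ x, ∃ t : ℕ, (w ^ t) x = M x := fun x => (hM1 x).exists_nat_pow_eq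
  let T : Fin n → ℕ := fun x => Nat.find (hex x)
  have hT : ∀ x, (w ^ T x) x = M x := fun x => Nat.find_spec (hex x)
  have hT2 : ∀ x t, (w ^ t) x = M x → T x ≤ t := fun x t h => Nat.find_min' (hex x) h
  have hTw : ∀ x, x ≠ M x → T x = T (w x) + 1 := by
    intro x hx
    apply le_antisymm
    · apply hT2
      rw [pow_succ, Perm.mul_apply, hT, hMw]
    · rcases h : T x with _ | t
      · have := hT x
        rw [h] at this
        exact absurd this hx
      · have := hT x
        rw [h, pow_succ, Perm.mul_apply] at this
        have := hT2 (w x) t (by rw [this, hMw])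
        omega
  let f : Fin n → Fin n ×ₗ ℕᵒᵈ := fun x => toLex (M x, OrderDual.toDual (T x))
  have hlt : ∀ x y, f x < f y ↔ M x < M y ∨ (M x = M y ∧ T y < T x) := by
    intro x y
    rw [Prod.Lex.lt_iff]
    rfl
  have hinj : Function.Injective f := by
    intro x y h
    have h1 : M x = M y := congrArg (fun z => (ofLex z).1) h
    have h2 : T x = T y := congrArg (fun z => OrderDual.ofDual (ofLex z).2) h
    have := hT x
    rw [h1, h2, ← hT y] at this
    exact (w ^ T y).injective this
  let π := Tuple.sort f
  have hmono : StrictMono (f ∘ π) :=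
    (Tuple.monotone_sort f).strictMono_of_injective (hinj.comp π.injective)
  refine ⟨π⁻¹ * w * π, ?_, ?_⟩
  · rw [isConj_iff]
    exact ⟨π⁻¹, by simp⟩
  · rw [expectedRank_eq w 1 le_rfl]
    unfold invCount
    have hkey : ∀ p ∈ (Finset.univ.filter fun p : Fin n × Fin n =>
        p.1 < p.2 ∧ (π⁻¹ * w * π) p.2 < (π⁻¹ * w * π) p.1),
        π p.2 = M (π p.1) ∧ π p.1 ≠ M (π p.1) := by
      intro p hp
      obtain ⟨h1, h2⟩ := (Finset.mem_filter.1 hp).2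
      have h1' := hmono h1
      have h2' := hmono h2
      have hpi : ∀ z, π (π⁻¹ z) = z := π.apply_symm_apply
      simp only [Function.comp, Perm.mul_apply, hpi] at h1' h2'
      rw [hlt] at h1' h2'
      rw [hMw, hMw] at h2'
      have hMeq : M (π p.1) = M (π p.2) := by
        rcases h1' with h | h
        · rcases h2' with h' | h'
          · exact absurd h (lt_asymm h')
          · exact h'.1.symm
        · exact h.1
      have hT1 : T (π p.2) < T (π p.1) := by
        rcases h1' with h | h
        · exact absurd hMeq h.ne
        · exact h.2
      have hT2' : T (w (π p.1)) < T (w (π p.2)) := by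
        rcases h2' with h | h
        · exact absurd hMeq h.ne'
        · exact h.2
      have hx : π p.1 ≠ M (π p.1) := by
        intro h
        have := hT2 (π p.1) 0 (by simpa using h)
        omega
      refine ⟨?_, hx⟩
      by_contra hy
      rw [hMeq] at hy
      have a1 := hTw _ hx
      have a2 := hTw _ hy
      omega
    apply Finset.card_le_card_of_injOn (fun p => π p.1)
    · intro p hp
      obtain ⟨h1, h2⟩ := hkey p hp
      simp only [Finset.coe_filter, Finset.mem_univ, true_and, Set.mem_ofPred_eq]
      apply Finset.card_pos.2
      exact ⟨M (π p.1), Finset.mem_filter.2 ⟨Finset.mem_univ _, hM1 _,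
        lt_of_le_of_ne (hM2 _ _ (Perm.SameCycle.refl _ _)) h2⟩⟩
    · intro p hp q hq h
      have h : π p.1 = π q.1 := h
      have h1 := (hkey p hp).1
      have h2 := (hkey q hq).1
      rw [h, ← h2] at h1
      exact Prod.ext (π.injective h) (π.injective h1)

/-- The simple transposition exchanging `i` and `i+1`. -/
def sw {N : ℕ} (i : Fin N) : Perm (Fin (N + 1)) := swap i.castSucc i.succ

/-- Product of a word in the simple transpositions. -/
def wd {N : ℕ} (l : List (Fin N)) : Perm (Fin (N + 1)) := (l.map sw).prod

lemma wd_cons {N : ℕ} (i : Fin N) (l : List (Fin N)) : wd (i :: l) = sw i * wd l := by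
  simp [wd]

lemma wd_append {N : ℕ} (l l' : List (Fin N)) : wd (l ++ l') = wd l * wd l' := by
  simp [wd]

lemma wd_nil {N : ℕ} : wd ([] : List (Fin N)) = 1 := by
  simp [wd]

lemma wd_single {N : ℕ} (i : Fin N) : wd [i] = sw i := by
  simp [wd]

lemma sw_val {N : ℕ} (i : Fin N) (x : Fin (N + 1)) :
    ((sw i x : Fin (N + 1)) : ℕ) =
      if (x : ℕ) = i then (i : ℕ) + 1 else if (x : ℕ) = i + 1 then (i : ℕ) else x := by
  unfold sw
  rw [swap_apply_def]
  simp only [Fin.ext_iff, Fin.val_castSucc, Fin.val_succ]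
  split_ifs <;> simp

lemma sw_sw {N : ℕ} (i : Fin N) : sw i * sw i = 1 := by
  simp [sw]

lemma sw_sw_apply {N : ℕ} (i : Fin N) (x : Fin (N + 1)) : sw i (sw i x) = x := by
  simp [sw]

lemma sw_lt {N : ℕ} (i : Fin N) (a b : Fin (N + 1)) (h : a < b)
    (hab : ¬ (a = i.castSucc ∧ b = i.succ)) : sw i a < sw i b := by
  rw [Fin.lt_def, sw_val, sw_val]
  rw [Fin.lt_def] at h
  simp only [Fin.ext_iff, Fin.val_castSucc, Fin.val_succ] at hab
  split_ifs <;> omega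

lemma invCount_descent {N : ℕ} (w : Perm (Fin (N + 1))) (i : Fin N)
    (h : w i.succ < w i.castSucc) : invCount (w * sw i) < invCount w := by
  unfold invCount
  have hmem : (i.castSucc, i.succ) ∈ (univ.filter fun p : Fin (N + 1) × Fin (N + 1) =>
      p.1 < p.2 ∧ w p.2 < w p.1) := by
    simp [h]
  apply lt_of_le_of_lt _ (Finset.card_erase_lt_of_mem hmem)
  apply Finset.card_le_card_of_injOn (fun p => (sw i p.1, sw i p.2))
  · intro p hp
    obtain ⟨h1, h2⟩ := (Finset.mem_filter.1 hp).2
    rw [Finset.mem_coe, Finset.mem_erase, Finset.mem_filter]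
    have hne : ¬ (p.1 = i.castSucc ∧ p.2 = i.succ) := by
      rintro ⟨h3, h4⟩
      rw [h3, h4] at h2
      simp only [Perm.mul_apply, sw, swap_apply_left, swap_apply_right] at h2
      exact lt_asymm h h2
    refine ⟨?_, Finset.mem_univ _, sw_lt i _ _ h1 hne, h2⟩
    intro heq
    have e1 : sw i p.1 = i.castSucc := congrArg Prod.fst heq
    have e2 : sw i p.2 = i.succ := congrArg Prod.snd heq
    have := sw_lt i _ _ h1 hne
    have e1' : p.1 = i.succ := by
      rw [← sw_sw_apply i p.1, e1]; simp [sw]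
    have e2' : p.2 = i.castSucc := by
      rw [← sw_sw_apply i p.2, e2]; simp [sw]
    rw [e1', e2', Fin.lt_def] at h1
    simp at h1
  · intro p _ q _ h
    have e1 : sw i p.1 = sw i q.1 := congrArg Prod.fst h
    have e2 : sw i p.2 = sw i q.2 := congrArg Prod.snd h
    exact Prod.ext ((sw i).injective e1) ((sw i).injective e2)

lemma perm_eq_one_of_strictMono {n : ℕ} (w : Perm (Fin n)) (hs : StrictMono w) : w = 1 := by
  have h : hs.orderIsoOfSurjective w w.surjective = OrderIso.refl _ := Subsingleton.elim _ _
  ext x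
  have := congrArg (fun e : Fin n ≃o Fin n => e x) h
  simp at this
  simp [this]

lemma exists_word {N : ℕ} : ∀ (d : ℕ) (w : Perm (Fin (N + 1))), invCount w ≤ d →
    ∃ l : List (Fin N), wd l = w ∧ l.length ≤ d := by
  intro d
  induction d with
  | zero =>
    intro w hw
    by_cases hex : ∃ i : Fin N, w i.succ < w i.castSucc
    · obtain ⟨i, hi⟩ := hex
      have := invCount_descent w i hi
      omega
    · push Not at hex
      have hs : StrictMono w := (Fin.monotone_iff_le_succ.2 hex).strictMono_of_injective w.injective
      refine ⟨[], ?_, by simp⟩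
      rw [wd_nil, perm_eq_one_of_strictMono w hs]
  | succ d ih =>
    intro w hw
    by_cases hex : ∃ i : Fin N, w i.succ < w i.castSucc
    · obtain ⟨i, hi⟩ := hex
      have := invCount_descent w i hi
      obtain ⟨l, hl, hl'⟩ := ih (w * sw i) (by omega)
      refine ⟨l ++ [i], ?_, by simp; omega⟩
      rw [wd_append, hl, wd_single, mul_assoc, sw_sw, mul_one]
    · push Not at hex
      have hs : StrictMono w := (Fin.monotone_iff_le_succ.2 hex).strictMono_of_injective w.injective
      refine ⟨[], ?_, by simp⟩
      rw [wd_nil, perm_eq_one_of_strictMono w hs]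

lemma wd_gap {N : ℕ} (i : ℕ) (l : List (Fin N)) (h : ∀ j ∈ l, (j : ℕ) ≠ i) (x : Fin (N + 1)) :
    ((wd l x : Fin (N + 1)) : ℕ) ≤ i ↔ (x : ℕ) ≤ i := by
  induction l with
  | nil => simp [wd_nil]
  | cons j l ih =>
    rw [wd_cons, Perm.mul_apply, ← ih (fun j hj => h j (List.mem_cons_of_mem _ hj)), sw_val]
    have := h j List.mem_cons_self
    split_ifs <;> omega

lemma wd_gap_sameCycle {N : ℕ} (i : ℕ) (l : List (Fin N)) (h : ∀ j ∈ l, (j : ℕ) ≠ i)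
    (x y : Fin (N + 1)) (hxy : (wd l).SameCycle x y) : (x : ℕ) ≤ i ↔ (y : ℕ) ≤ i := by
  obtain ⟨t, rfl⟩ := hxy.exists_nat_pow_eq
  induction t with
  | zero => simp
  | succ t ih =>
    rw [pow_succ', Perm.mul_apply, wd_gap i l h]
    exact ih ⟨t, by simp⟩

/-- The starting points of runs of `m` consecutive letters of the word. -/
def runs {N : ℕ} (l : List (Fin N)) (m : ℕ) (c : Fin (N + 1)) : Prop :=
  ∀ r < m, ∃ j ∈ l, (j : ℕ) = c + r

open Classical in
/-- A minimal length word has no repetitions, and its cycles are the blocks. -/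
lemma structure_of_min {N : ℕ} (l : List (Fin N)) (h : l.length ≤ expectedRank (wd l) 1) :
    l.Nodup ∧ ∀ m, 1 ≤ m → expectedRank (wd l) m = (univ.filter (runs l m)).card := by
  rw [expectedRank_eq _ 1 le_rfl] at h
  have hsub : (univ.filter fun x : Fin (N + 1) =>
      1 ≤ (univ.filter fun y => (wd l).SameCycle x y ∧ x < y).card) ⊆
      l.toFinset.image Fin.castSucc := by
    intro x hx
    have hx := (Finset.mem_filter.1 hx).2
    obtain ⟨y, hy⟩ := Finset.card_pos.1 hx
    obtain ⟨h1, h2⟩ := (Finset.mem_filter.1 hy).2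
    by_contra hc
    have := wd_gap_sameCycle x l (fun j hj e => hc (by
      rw [Finset.mem_image]
      exact ⟨j, by simpa using hj, Fin.ext e⟩)) x y h1
    rw [Fin.lt_def] at h2
    omega
  have c1 := Finset.card_le_card hsub
  have c2 : (l.toFinset.image Fin.castSucc).card ≤ l.toFinset.card := Finset.card_image_le
  have c3 := l.toFinset_card_le
  have hnd : l.Nodup := by
    rw [← Multiset.coe_nodup, ← Multiset.toFinset_card_eq_card_iff_nodup]
    change l.toFinset.card = l.length
    omega
  refine ⟨hnd, ?_⟩
  have heq := Finset.eq_of_subset_of_card_le hsub (by omega)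
  -- every letter has a larger element in its cycle
  have hup : ∀ x : Fin (N + 1), (∃ j ∈ l, (j : ℕ) = x) → ∃ y, (wd l).SameCycle x y ∧ x < y := by
    rintro x ⟨j, hj, hjx⟩
    have : x ∈ l.toFinset.image Fin.castSucc := by
      rw [Finset.mem_image]
      exact ⟨j, by simpa using hj, Fin.ext hjx⟩
    rw [← heq] at this
    obtain ⟨y, hy⟩ := Finset.card_pos.1 (Finset.mem_filter.1 this).2
    exact ⟨y, (Finset.mem_filter.1 hy).2⟩
  have hstep : ∀ x y : Fin (N + 1), x < y → (∀ c : ℕ, x ≤ c → c < y → ∃ j ∈ l, (j : ℕ) = c) →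
      (wd l).SameCycle x y := by
    -- the maximum of each cycle is not a letter
    have hmax : ∀ x : Fin (N + 1), ∃ z, (wd l).SameCycle x z ∧ x ≤ z ∧
        ∀ j ∈ l, (j : ℕ) ≠ z := by
      intro x
      have hne : (univ.filter fun y => (wd l).SameCycle x y).Nonempty :=
        ⟨x, by simp [Perm.SameCycle.refl]⟩
      have hm := (Finset.mem_filter.1 (Finset.max'_mem _ hne)).2
      refine ⟨_, hm, Finset.le_max' _ _ (by simp [Perm.SameCycle.refl]), ?_⟩
      intro j hj e
      obtain ⟨y, hy1, hy2⟩ := hup _ ⟨j, hj, e⟩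
      exact absurd (Finset.le_max' _ y (by simpa using hm.trans hy1)) (not_le.2 hy2)
    intro x y hxy hc
    obtain ⟨z, hz1, hz2, hz3⟩ := hmax x
    obtain ⟨z', hz1', hz2', hz3'⟩ := hmax y
    have e1 := wd_gap_sameCycle z' l hz3' x z hz1
    have e2 := wd_gap_sameCycle z l hz3 y z' hz1'
    have hzy : y ≤ z := by
      by_contra hlt
      rw [Fin.le_def] at hz2
      rw [not_le, Fin.lt_def] at hlt
      obtain ⟨j, hj, hjz⟩ := hc z hz2 hlt
      exact hz3 j hj hjz
    have : z = z' := by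
      rw [Fin.le_def] at *
      rw [Fin.lt_def] at *
      apply Fin.ext
      omega
    rw [this] at hz1
    exact hz1.trans hz1'.symm
  intro m hm
  rw [expectedRank_eq _ m hm]
  congr 1
  apply Finset.filter_congr
  intro x _
  constructor
  · intro hcard r hr
    by_contra hcon
    have hcon' : ∀ j ∈ l, (j : ℕ) ≠ x + r := fun j hj e => hcon ⟨j, hj, e⟩
    have hle : (univ.filter fun y => (wd l).SameCycle x y ∧ x < y).card ≤
        (Finset.Ioc (x : ℕ) (x + r)).card := by
      apply Finset.card_le_card_of_injOn (fun y : Fin (N + 1) => (y : ℕ))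
      · intro y hy
        obtain ⟨h1, h2⟩ := (Finset.mem_filter.1 hy).2
        have := wd_gap_sameCycle _ l hcon' x y h1
        rw [Fin.lt_def] at h2
        simp only [Finset.coe_Ioc, Set.mem_Ioc]
        omega
      · intro a _ b _ h
        exact Fin.ext h
    rw [Nat.card_Ioc] at hle
    omega
  · intro hruns
    have hbd : (x : ℕ) + m ≤ N := by
      obtain ⟨j, _, hj⟩ := hruns (m - 1) (by omega)
      have := j.2
      omega
    calc m = (Finset.Ioc (x : ℕ) (x + m)).card := by simp
      _ ≤ _ := by
        apply Finset.card_le_card_of_injOn (fun t => Fin.ofNat (N + 1) t)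
        · intro t ht
          simp only [Finset.coe_Ioc, Set.mem_Ioc] at ht
          have hv : ((Fin.ofNat (N + 1) t : Fin (N + 1)) : ℕ) = t := by
            simp only [Fin.val_ofNat]
            exact Nat.mod_eq_of_lt (by omega)
          have hlt : x < Fin.ofNat (N + 1) t := by
            rw [Fin.lt_def, hv]; exact ht.1
          rw [Finset.mem_coe, Finset.mem_filter]
          refine ⟨Finset.mem_univ _, hstep _ _ hlt ?_, hlt⟩
          intro c hc1 hc2
          rw [hv] at hc2
          obtain ⟨j, hj, hjc⟩ := hruns (c - x) (by omega)
          exact ⟨j, hj, by omega⟩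
        · intro a ha b hb h
          simp only [Finset.coe_Ioc, Set.mem_Ioc] at ha hb
          have := congrArg Fin.val h
          simp only [Fin.val_ofNat] at this
          rwa [Nat.mod_eq_of_lt (by omega), Nat.mod_eq_of_lt (by omega)] at this

section Mat

variable {k : Type*} [Field k]

lemma permMat_mul {n : ℕ} (σ τ : Perm (Fin n)) :
    (permMat σ * permMat τ : Matrix (Fin n) (Fin n) k) = permMat (σ * τ) := by
  ext i j
  simp only [permMat, Matrix.mul_apply, Matrix.of_apply, mul_ite, mul_one, mul_zero]
  rw [Finset.sum_eq_single (τ j)]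
  · rw [if_pos rfl]
    by_cases h : i = σ (τ j)
    · exact (if_pos h).trans (if_pos (show i = (σ * τ) j from h)).symm
    · exact (if_neg h).trans (if_neg (show ¬ i = (σ * τ) j from h)).symm
  · intro b _ hb
    rw [if_neg hb]
  · simp

lemma permMat_one {n : ℕ} : (permMat 1 : Matrix (Fin n) (Fin n) k) = 1 := by
  ext i j
  simp only [permMat, Matrix.one_apply, Matrix.of_apply]
  by_cases h : i = j
  · exact (if_pos (show i = (1 : Perm (Fin n)) j from h)).trans (if_pos h).symm
  · exact (if_neg (show ¬ i = (1 : Perm (Fin n)) j from h)).trans (if_neg h).symm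

lemma permMat_det {n : ℕ} (σ : Perm (Fin n)) :
    IsUnit (permMat σ : Matrix (Fin n) (Fin n) k).det := by
  apply Matrix.isUnit_det_of_right_inverse (B := permMat σ⁻¹)
  rw [permMat_mul, mul_inv_cancel, permMat_one]

lemma mul_permMat_apply {n : ℕ} (M : Matrix (Fin n) (Fin n) k) (σ : Perm (Fin n)) (i j : Fin n) :
    (M * permMat σ : Matrix (Fin n) (Fin n) k) i j = M i (σ j) := by
  simp [permMat, Matrix.mul_apply]

lemma permMat_mul_apply {n : ℕ} (M : Matrix (Fin n) (Fin n) k) (σ : Perm (Fin n)) (i j : Fin n) :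
    (permMat σ * M : Matrix (Fin n) (Fin n) k) (σ i) j = M i j := by
  simp [permMat, Matrix.mul_apply]

lemma upper_one {n : ℕ} : IsUpperTriangular (1 : Matrix (Fin n) (Fin n) k) := by
  intro i j h
  exact Matrix.one_apply_ne h.ne'

lemma upper_mul {n : ℕ} {A B : Matrix (Fin n) (Fin n) k} (hA : IsUpperTriangular A)
    (hB : IsUpperTriangular B) : IsUpperTriangular (A * B) := by
  intro i j h
  rw [Matrix.mul_apply]
  apply Finset.sum_eq_zero
  intro c _
  by_cases hc : c < i
  · rw [hA i c hc, zero_mul]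
  · rw [hB c j (lt_of_lt_of_le h (not_lt.1 hc)), mul_zero]

lemma upper_transvection {n : ℕ} (i j : Fin n) (h : i < j) (t : k) :
    IsUpperTriangular (Matrix.transvection i j t) := by
  intro a b hab
  rw [Matrix.transvection, Matrix.add_apply, upper_one a b hab, zero_add]
  apply Matrix.single_apply_of_ne
  rintro ⟨rfl, rfl⟩
  exact lt_asymm h hab

lemma transvection_det {n : ℕ} (i j : Fin n) (h : i ≠ j) (t : k) :
    IsUnit (Matrix.transvection i j t).det := by
  rw [Matrix.det_transvection_of_ne i j h]
  exact isUnit_one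

lemma upper_diag_ne {n : ℕ} {A : Matrix (Fin n) (Fin n) k} (hA : IsUpperTriangular A)
    (hd : IsUnit A.det) (i : Fin n) : A i i ≠ 0 := by
  rw [Matrix.det_of_isUpperTriangular (fun a b h => hA a b h)] at hd
  exact Finset.prod_ne_zero_iff.1 hd.ne_zero i (Finset.mem_univ _)

lemma isUnit_det_mul {n : ℕ} {A B : Matrix (Fin n) (Fin n) k} (hA : IsUnit A.det)
    (hB : IsUnit B.det) : IsUnit (A * B).det := by
  rw [Matrix.det_mul]
  exact hA.mul hB

lemma coset_det {n : ℕ} {w : Perm (Fin n)} {A : Matrix (Fin n) (Fin n) k}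
    (hA : A ∈ doubleCoset (permMat w)) : IsUnit A.det := by
  obtain ⟨b1, b2, _, _, h3, h4, rfl⟩ := hA
  exact isUnit_det_mul (isUnit_det_mul h3 (permMat_det w)) h4

lemma coset_split {n : ℕ} {v w : Perm (Fin n)} {A : Matrix (Fin n) (Fin n) k}
    (hA : A ∈ doubleCoset (permMat (v * w))) :
    ∃ X ∈ doubleCoset (permMat (k := k) v), ∃ Y ∈ doubleCoset (permMat (k := k) w), A = X * Y := by
  obtain ⟨b1, b2, h1, h2, h3, h4, rfl⟩ := hA
  refine ⟨b1 * permMat v, ⟨b1, 1, h1, upper_one, h3, by simp, by simp⟩, permMat w * b2,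
    ⟨1, b2, upper_one, h2, by simp, h4, by simp⟩, ?_⟩
  rw [← permMat_mul]
  simp only [mul_assoc]

lemma permMat_transvection {n : ℕ} (w : Perm (Fin n)) (i j : Fin n) (t : k) :
    permMat w * Matrix.transvection i j t = Matrix.transvection (w i) (w j) t * permMat w := by
  ext a b
  obtain ⟨a, rfl⟩ := w.surjective a
  rw [permMat_mul_apply, mul_permMat_apply]
  simp [Matrix.transvection, Matrix.one_apply, Matrix.single_apply]

lemma coset_mul_simple {N : ℕ} {w : Perm (Fin (N + 1))} (i : Fin N)
    (hw : w i.castSucc < w i.succ) {A B : Matrix (Fin (N + 1)) (Fin (N + 1)) k}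
    (hA : A ∈ doubleCoset (permMat w)) (hB : B ∈ doubleCoset (permMat (sw i))) :
    A * B ∈ doubleCoset (permMat (w * sw i)) := by
  obtain ⟨b1, b2, h1, h2, h3, h4, rfl⟩ := hA
  obtain ⟨c1, c2, g1, g2, g3, g4, rfl⟩ := hB
  have hb := upper_mul h2 g1
  have hbd := isUnit_det_mul h4 g3
  set b := b2 * c1 with hbdef
  have hne : i.castSucc < i.succ := Fin.castSucc_lt_succ
  have hbne := upper_diag_ne hb hbd i.succ
  let t : k := b i.castSucc i.succ / b i.succ i.succ
  let b' := Matrix.transvection i.castSucc i.succ (-t) * b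
  have hbb : b = Matrix.transvection i.castSucc i.succ t * b' := by
    simp only [b']
    rw [← mul_assoc, Matrix.transvection_mul_transvection_same _ _ hne.ne]
    simp
  have hb'u : IsUpperTriangular b' := upper_mul (upper_transvection _ _ hne _) hb
  have hb'0 : b' i.castSucc i.succ = 0 := by
    simp only [b']
    rw [Matrix.transvection_mul_apply_same]
    simp only [t]
    field_simp
    ring
  let d : Matrix (Fin (N + 1)) (Fin (N + 1)) k := permMat (sw i) * b' * permMat (sw i)
  have hd : IsUpperTriangular d := by
    intro a c hac
    obtain ⟨a, rfl⟩ := (sw i).surjective a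
    simp only [d]
    rw [mul_permMat_apply, permMat_mul_apply]
    by_cases h : c = i.castSucc ∧ sw i a = i.succ
    · obtain ⟨rfl, h'⟩ := h
      have : a = i.castSucc := by
        rw [← sw_sw_apply i a, h']; simp [sw]
      rw [this]
      simp only [sw, swap_apply_left]
      exact hb'0
    · have := sw_lt i _ _ hac h
      rw [sw_sw_apply] at this
      exact hb'u _ _ this
  have hdd : IsUnit d.det :=
    isUnit_det_mul (isUnit_det_mul (permMat_det _)
      (isUnit_det_mul (transvection_det _ _ hne.ne _) hbd)) (permMat_det _)
  refine ⟨b1 * Matrix.transvection (w i.castSucc) (w i.succ) t, d * c2,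
    upper_mul h1 (upper_transvection _ _ hw _), upper_mul hd g2,
    isUnit_det_mul h3 (transvection_det _ _ hw.ne _), isUnit_det_mul hdd g4, ?_⟩
  have hss : (permMat (sw i) * permMat (sw i) : Matrix (Fin (N + 1)) (Fin (N + 1)) k) = 1 := by
    rw [permMat_mul, sw_sw, permMat_one]
  calc b1 * permMat w * b2 * (c1 * permMat (sw i) * c2)
      = b1 * (permMat w * b) * permMat (sw i) * c2 := by
        rw [hbdef]; simp only [mul_assoc]
    _ = b1 * (permMat w * Matrix.transvection i.castSucc i.succ t) * b' * permMat (sw i) * c2 := by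
        rw [hbb]; simp only [mul_assoc]
    _ = b1 * (Matrix.transvection (w i.castSucc) (w i.succ) t * permMat w) *
          (permMat (sw i) * permMat (sw i)) * b' * permMat (sw i) * c2 := by
        rw [permMat_transvection, hss, mul_one]
    _ = _ := by
        rw [← permMat_mul]
        simp only [d, mul_assoc]

lemma coset_mul_word {N : ℕ} (l' : List (Fin N)) :
    ∀ (l : List (Fin N)) (A B : Matrix (Fin (N + 1)) (Fin (N + 1)) k), (l ++ l').Nodup →
    A ∈ doubleCoset (permMat (wd l)) → B ∈ doubleCoset (permMat (wd l')) →
    A * B ∈ doubleCoset (permMat (wd (l ++ l'))) := by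
  induction l' with
  | nil =>
    intro l A B _ hA hB
    rw [wd_nil] at hB
    obtain ⟨b1, b2, h1, h2, h3, h4, rfl⟩ := hA
    obtain ⟨c1, c2, g1, g2, g3, g4, rfl⟩ := hB
    rw [permMat_one, mul_one, List.append_nil]
    exact ⟨b1, b2 * (c1 * c2), h1, upper_mul h2 (upper_mul g1 g2), h3,
      isUnit_det_mul h4 (isUnit_det_mul g3 g4), by simp only [mul_assoc]⟩
  | cons j l' ih =>
    intro l A B hnd hA hB
    rw [wd_cons] at hB
    obtain ⟨X, hX, Y, hY, rfl⟩ := coset_split hB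
    have hnd' : ((l ++ [j]) ++ l').Nodup := by simpa using hnd
    have hj : ∀ a ∈ l, (a : ℕ) ≠ j := by
      intro a ha e
      have hd := (List.nodup_append.1 hnd).2.2 a ha j List.mem_cons_self
      exact hd (Fin.ext e)
    have hlt : wd l j.castSucc < wd l j.succ := by
      have e1 := wd_gap j l hj j.castSucc
      have e2 := wd_gap j l hj j.succ
      rw [Fin.lt_def]
      simp only [Fin.val_castSucc, Fin.val_succ] at e1 e2
      omega
    have h1 := coset_mul_simple j hlt hA hX
    rw [← wd_single, ← wd_append] at h1
    have := ih (l ++ [j]) (A * X) Y hnd' h1 hY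
    rw [mul_assoc] at this
    simpa using this

lemma sw_comm {N : ℕ} (i j : Fin N) (h : (i : ℕ) + 1 < j) : Commute (sw i) (sw j) := by
  ext x
  simp only [Perm.mul_apply, sw_val]
  split_ifs <;> omega

lemma wd_comm {N : ℕ} (l t : List (Fin N)) (h : ∀ a ∈ l, ∀ b ∈ t, (a : ℕ) + 1 < b) :
    Commute (wd l) (wd t) := by
  unfold wd
  apply Commute.list_prod_left
  intro x hx
  apply Commute.list_prod_right
  intro y hy
  obtain ⟨a, ha, rfl⟩ := List.mem_map.1 hx
  obtain ⟨b, hb, rfl⟩ := List.mem_map.1 hy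
  exact sw_comm a b (h a ha b hb)

/-- Every element of the double coset of a repetition free word is conjugate to one in the
double coset of the sorted word. -/
lemma exists_sorted {N : ℕ} : ∀ (d : ℕ) (l t : List (Fin N)), l.length = d → (l ++ t).Nodup →
    t.Pairwise (· < ·) → (∀ a ∈ l, ∀ b ∈ t, a < b) →
    ∀ g : Matrix (Fin (N + 1)) (Fin (N + 1)) k, g ∈ doubleCoset (permMat (wd (l ++ t))) →
    ∃ t' : List (Fin N), t'.Pairwise (· < ·) ∧ (∀ x, x ∈ t' ↔ x ∈ l ++ t) ∧
    ∃ c : (Matrix (Fin (N + 1)) (Fin (N + 1)) k)ˣ,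
      (c⁻¹).val * g * c.val ∈ doubleCoset (permMat (wd t')) := by
  intro d
  induction d with
  | zero =>
    intro l t hl _ ht _ g hg
    obtain rfl := List.length_eq_zero_iff.1 hl
    exact ⟨t, ht, by simp, 1, by simpa using hg⟩
  | succ d ih =>
    intro l t hl hnd ht hlt g hg
    have hne : l.toFinset.Nonempty := by
      rw [List.toFinset_nonempty_iff]
      rintro rfl
      simp at hl
    obtain ⟨j, hj, hjmax⟩ := l.toFinset.exists_max_image id hne
    rw [List.mem_toFinset] at hj
    obtain ⟨l1, l2, rfl⟩ := List.append_of_mem hj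
    have hp : (l1 ++ j :: l2).Nodup := (List.nodup_append.1 hnd).1
    have hp' : (j :: (l1 ++ l2)).Nodup := List.perm_middle.nodup_iff.1 hp
    have hlj : ∀ a ∈ l2 ++ l1, a < j := by
      intro a ha
      have ha' : a ∈ l1 ++ l2 := by simpa [or_comm] using ha
      have h1 := hjmax a (by
        rw [List.mem_toFinset]
        exact List.perm_middle.symm.subset (List.mem_cons_of_mem _ ha'))
      refine lt_of_le_of_ne h1 ?_
      rintro rfl
      exact (List.nodup_cons.1 hp').1 ha'
    have hcomm : Commute (wd l2) (wd t) := by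
      apply wd_comm
      intro a ha b hb
      have h1 := hlj a (by simp [ha])
      have h2 := hlt j hj b hb
      rw [Fin.lt_def] at h1 h2
      omega
    have hw : wd (l1 ++ j :: l2 ++ t) = wd (l1 ++ j :: t) * wd l2 := by
      simp only [wd_append, wd_cons, mul_assoc, hcomm.eq]
    rw [hw] at hg
    obtain ⟨X, hX, Y, hY, rfl⟩ := coset_split hg
    have hperm : (l1 ++ j :: l2 ++ t).Perm (l2 ++ l1 ++ (j :: t)) := by
      rw [← Multiset.coe_eq_coe]
      simp only [← Multiset.coe_add, ← Multiset.cons_coe, ← Multiset.singleton_add]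
      abel
    have hnd2 := hperm.nodup_iff.1 hnd
    have hYX := coset_mul_word (l1 ++ j :: t) l2 Y X (by simpa using hnd2) hY hX
    rw [← List.append_assoc] at hYX
    obtain ⟨t', h1, h2, c, hc⟩ := ih (l2 ++ l1) (j :: t)
      (by simp at hl ⊢; omega) hnd2
      (List.pairwise_cons.2 ⟨fun b hb => hlt j hj b hb, ht⟩)
      (by
        intro a ha b hb
        rcases List.mem_cons.1 hb with rfl | hb
        · exact hlj a ha
        · exact (hlj a ha).trans (hlt j hj b hb))
      (Y * X) hYX
    refine ⟨t', h1, fun x => (h2 x).trans hperm.mem_iff.symm, ?_⟩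
    have hXu : IsUnit X := (Matrix.isUnit_iff_isUnit_det _).2 (coset_det hX)
    obtain ⟨u, rfl⟩ := hXu
    refine ⟨u * c, ?_⟩
    have : ((u * c)⁻¹).val * (u.val * Y) * (u * c).val
        = (c⁻¹).val * (Y * u.val) * c.val := by
      rw [mul_inv_rev, Units.val_mul, Units.val_mul]
      simp only [mul_assoc, Units.inv_mul_cancel_left]
    rw [this]
    exact hc

end Mat

section Mat2

variable {k : Type*} [Field k]

lemma wd_fix_le {N : ℕ} (t : List (Fin N)) (x : Fin (N + 1)) (h : ∀ a ∈ t, (x : ℕ) < a) :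
    wd t x = x := by
  induction t with
  | nil => simp [wd_nil]
  | cons a t ih =>
    rw [wd_cons, Perm.mul_apply, ih (fun b hb => h b (List.mem_cons_of_mem _ hb))]
    apply Fin.ext
    rw [sw_val]
    have := h a List.mem_cons_self
    split_ifs <;> omega

lemma sorted_hess {N : ℕ} (t : List (Fin N)) (ht : t.Pairwise (· < ·)) :
    (∀ x : Fin (N + 1), ((wd t x : Fin (N + 1)) : ℕ) ≤ x + 1) ∧
    (∀ i ∈ t, wd t i.castSucc = i.succ) := by
  induction t with
  | nil => simp [wd_nil]
  | cons a t ih =>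
    obtain ⟨h1, h2⟩ := List.pairwise_cons.1 ht
    obtain ⟨ih1, ih2⟩ := ih h2
    have hfix : wd t a.castSucc = a.castSucc := wd_fix_le t _ (fun b hb => h1 b hb)
    constructor
    · intro x
      rw [wd_cons, Perm.mul_apply, sw_val]
      have := ih1 x
      split_ifs with e1 e2
      · have hx : x = a.castSucc := by
          apply (wd t).injective
          rw [hfix]
          exact Fin.ext e1
        simp [hx]
      · omega
      · exact this
    · intro i hi
      rw [wd_cons, Perm.mul_apply]
      rcases List.mem_cons.1 hi with rfl | hi
      · rw [hfix]
        simp [sw]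
      · rw [ih2 i hi]
        have := h1 i hi
        rw [Fin.lt_def] at this
        apply Fin.ext
        rw [sw_val]
        simp only [Fin.val_succ]
        split_ifs <;> omega

/-- Elements of the double coset of a sorted word are upper Hessenberg. -/
lemma coset_hess {N : ℕ} (t : List (Fin N)) (ht : t.Pairwise (· < ·))
    (g : Matrix (Fin (N + 1)) (Fin (N + 1)) k) (hg : g ∈ doubleCoset (permMat (wd t))) :
    (∀ a c : Fin (N + 1), (c : ℕ) + 1 < a → g a c = 0) ∧ ∀ i ∈ t, g i.succ i.castSucc ≠ 0 := by
  obtain ⟨hs1, hs2⟩ := sorted_hess t ht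
  obtain ⟨b1, b2, h1, h2, h3, h4, rfl⟩ := hg
  have hz : ∀ a c c' : Fin (N + 1), c' ≤ c → (c : ℕ) < a → (c' ≠ c ∨ (c : ℕ) + 1 < a) →
      (b1 * permMat (wd t) : Matrix (Fin (N + 1)) (Fin (N + 1)) k) a c' * b2 c' c = 0 := by
    intro a c c' hcc hca h
    rw [mul_permMat_apply]
    have := hs1 c'
    rw [h1, zero_mul]
    rw [Fin.lt_def]
    rw [Fin.le_def] at hcc
    rcases h with h | h
    · have : (c' : ℕ) ≠ c := fun e => h (Fin.ext e)
      omega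
    · omega
  constructor
  · intro a c hac
    rw [Matrix.mul_apply]
    apply Finset.sum_eq_zero
    intro c' _
    by_cases hc : c < c'
    · rw [h2 _ _ hc, mul_zero]
    · exact hz a c c' (not_lt.1 hc) (by omega) (Or.inr hac)
  · intro i hi
    rw [Matrix.mul_apply, Finset.sum_eq_single i.castSucc]
    · rw [mul_permMat_apply, hs2 i hi]
      exact mul_ne_zero (upper_diag_ne h1 h3 _) (upper_diag_ne h2 h4 _)
    · intro c' _ hc'
      by_cases hc : i.castSucc < c'
      · rw [h2 _ _ hc, mul_zero]
      · exact hz _ _ c' (not_lt.1 hc) (by simp) (Or.inl hc')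
    · simp

lemma hess_pow {n : ℕ} (A : Matrix (Fin n) (Fin n) k)
    (hA : ∀ a c : Fin n, (c : ℕ) + 1 < a → A a c = 0) (m : ℕ) :
    (∀ a c : Fin n, (c : ℕ) + m < a → (A ^ m) a c = 0) ∧
    (∀ a c : Fin n, (a : ℕ) = c + m →
      (∀ x y : Fin n, c ≤ x → (x : ℕ) < c + m → (y : ℕ) = x + 1 → A y x ≠ 0) →
      (A ^ m) a c ≠ 0) := by
  induction m with
  | zero =>
    constructor
    · intro a c h
      rw [pow_zero, Matrix.one_apply_ne]
      rintro rfl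
      omega
    · intro a c h _
      have : a = c := Fin.ext h
      rw [this, pow_zero, Matrix.one_apply_eq]
      exact one_ne_zero
  | succ m ih =>
    obtain ⟨ih1, ih2⟩ := ih
    constructor
    · intro a c h
      rw [pow_succ', Matrix.mul_apply]
      apply Finset.sum_eq_zero
      intro x _
      by_cases hx : (x : ℕ) + 1 < a
      · rw [hA _ _ hx, zero_mul]
      · rw [ih1 x c (by omega), mul_zero]
    · intro a c h hne
      have hlt := a.2
      let x : Fin n := ⟨c + m, by omega⟩
      rw [pow_succ', Matrix.mul_apply, Finset.sum_eq_single x]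
      · apply mul_ne_zero
        · apply hne x a
          · rw [Fin.le_def]; simp [x]
          · simp [x]
          · simp [x]; omega
        · apply ih2 x c rfl
          intro x' y' h1 h2 h3
          exact hne x' y' h1 (by omega) h3
      · intro x' _ hx'
        have hv : (x' : ℕ) ≠ c + m := fun e => hx' (Fin.ext e)
        by_cases hx : (x' : ℕ) + 1 < a
        · rw [hA _ _ hx, zero_mul]
        · rw [ih1 x' c (by omega), mul_zero]
      · simp

lemma rank_lower {N : ℕ} (A : Matrix (Fin (N + 1)) (Fin (N + 1)) k) (m : ℕ)
    (S : Finset (Fin (N + 1))) (hS : ∀ c ∈ S, (c : ℕ) + m < N + 1)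
    (h1 : ∀ a c : Fin (N + 1), (c : ℕ) + m < a → A a c = 0)
    (h2 : ∀ a c : Fin (N + 1), c ∈ S → (a : ℕ) = c + m → A a c ≠ 0) : S.card ≤ A.rank := by
  let r : S → Fin (N + 1) := fun c => ⟨c.1 + m, hS c.1 c.2⟩
  let M := A.submatrix r (fun c : S => c.1)
  have hM : M.det ≠ 0 := by
    rw [Matrix.det_of_isUpperTriangular]
    · apply Finset.prod_ne_zero_iff.2
      intro c _
      exact h2 _ _ c.2 rfl
    · intro a c hac
      apply h1
      have hac : c.1 < a.1 := hac
      rw [Fin.lt_def] at hac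
      simp only [r]
      omega
  have hr := Matrix.rank_of_isUnit M ((Matrix.isUnit_iff_isUnit_det _).2 hM.isUnit)
  have := Matrix.rank_submatrix_le A r (fun c : S => c.1)
  rw [Fintype.card_coe] at hr
  rw [← hr]
  exact this

lemma rank_upper {n : ℕ} (A : Matrix (Fin n) (Fin n) k)
    (S : Finset (Fin n)) (h : ∀ a c : Fin n, c ∉ S → A a c = 0) : A.rank ≤ S.card := by
  classical
  have : A = A * Matrix.diagonal (fun c => if c ∈ S then 1 else 0) := by
    ext a c
    rw [Matrix.mul_diagonal]
    split_ifs with hc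
    · simp
    · simp [h a c hc]
  rw [this]
  apply (Matrix.rank_mul_le_right _ _).trans
  rw [Matrix.rank_diagonal]
  rw [Fintype.card_subtype]
  apply Finset.card_le_card
  intro c hc
  simpa using hc

lemma runs_lt {N : ℕ} (l : List (Fin N)) (m : ℕ) (hm : 1 ≤ m) (c : Fin (N + 1)) (h : runs l m c) :
    (c : ℕ) + m < N + 1 := by
  obtain ⟨j, _, hj⟩ := h (m - 1) (by omega)
  have := j.2
  omega

open Classical in
lemma lower_bound {N : ℕ} (l : List (Fin N)) (hl : l.Nodup)
    (g : Matrix (Fin (N + 1)) (Fin (N + 1)) k) (hg : g ∈ doubleCoset (permMat (wd l)))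
    (m : ℕ) (hm : 1 ≤ m) : (univ.filter (runs l m)).card ≤ ((g - 1) ^ m).rank := by
  obtain ⟨t, ht, htl, c, hc⟩ := exists_sorted l.length l [] rfl (by simpa using hl)
    List.Pairwise.nil (by simp) g (by simpa using hg)
  obtain ⟨h1, h2⟩ := coset_hess t ht _ hc
  set g' := (c⁻¹).val * g * c.val with hg'
  have hconj : (g' - 1) ^ m = (c⁻¹).val * (g - 1) ^ m * c.val := by
    have e : g' - 1 = (c⁻¹).val * (g - 1) * c.val := by
      rw [hg', mul_sub, sub_mul, mul_one, Units.inv_mul]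
    rw [e, Units.conj_pow']
  have hH : ∀ a c : Fin (N + 1), (c : ℕ) + 1 < a → (g' - 1) a c = 0 := by
    intro a c hac
    rw [Matrix.sub_apply, h1 a c hac, Matrix.one_apply_ne, sub_zero]
    rintro rfl
    omega
  obtain ⟨p1, p2⟩ := hess_pow (g' - 1) hH m
  have hr : (univ.filter (runs l m)).card ≤ ((g' - 1) ^ m).rank := by
    apply rank_lower _ m
    · intro c hc
      exact runs_lt l m hm c (Finset.mem_filter.1 hc).2
    · exact p1
    · intro a c hc hac
      have hc := (Finset.mem_filter.1 hc).2
      apply p2 a c hac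
      intro x y hx1 hx2 hy
      rw [Fin.le_def] at hx1
      obtain ⟨j, hj, hjx⟩ := hc (x - c) (by omega)
      have hx : x = j.castSucc := Fin.ext (by simp; omega)
      have hy' : y = j.succ := Fin.ext (by simp; omega)
      rw [Matrix.sub_apply, Matrix.one_apply_ne, sub_zero, hx, hy']
      · exact h2 j ((htl j).2 (by simpa using hj))
      · rintro rfl
        omega
  apply hr.trans
  rw [hconj]
  exact (Matrix.rank_mul_le_left _ _).trans (Matrix.rank_mul_le_right _ _)

/-- Lower triangular matrices of depth `m` supported on the blocks of `l`. -/
def low {N : ℕ} (l : List (Fin N)) (m : ℕ) (A : Matrix (Fin (N + 1)) (Fin (N + 1)) k) : Prop :=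
  ∀ a b : Fin (N + 1), A a b ≠ 0 →
    (b : ℕ) + m ≤ a ∧ ∀ c : ℕ, b ≤ c → c < a → ∃ j ∈ l, (j : ℕ) = c

lemma low_mul {N : ℕ} {l : List (Fin N)} {m m' : ℕ} {A B : Matrix (Fin (N + 1)) (Fin (N + 1)) k}
    (hA : low l m A) (hB : low l m' B) : low l (m + m') (A * B) := by
  intro a b h
  rw [Matrix.mul_apply] at h
  obtain ⟨x, _, hx⟩ := Finset.exists_ne_zero_of_sum_ne_zero h
  obtain ⟨a1, a2⟩ := hA a x (left_ne_zero_of_mul hx)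
  obtain ⟨b1, b2⟩ := hB x b (right_ne_zero_of_mul hx)
  refine ⟨by omega, ?_⟩
  intro c hc1 hc2
  by_cases hc : c < x
  · exact b2 c hc1 hc
  · exact a2 c (by omega) hc2

lemma low_one {N : ℕ} (l : List (Fin N)) :
    low l 0 (1 : Matrix (Fin (N + 1)) (Fin (N + 1)) k) := by
  intro a b h
  have : a = b := by
    by_contra hne
    exact h (Matrix.one_apply_ne hne)
  subst this
  exact ⟨le_rfl, fun c h1 h2 => by omega⟩

lemma low_add {N : ℕ} {l : List (Fin N)} {m : ℕ} {A B : Matrix (Fin (N + 1)) (Fin (N + 1)) k}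
    (hA : low l m A) (hB : low l m B) : low l m (A + B) := by
  intro a b h
  by_cases hz : A a b = 0
  · apply hB a b
    rwa [Matrix.add_apply, hz, zero_add] at h
  · exact hA a b hz

lemma low_mono {N : ℕ} {l : List (Fin N)} {m m' : ℕ} (h : m ≤ m')
    {A : Matrix (Fin (N + 1)) (Fin (N + 1)) k} (hA : low l m' A) : low l m A := by
  intro a b hab
  obtain ⟨h1, h2⟩ := hA a b hab
  exact ⟨by omega, h2⟩

lemma low_pow {N : ℕ} {l : List (Fin N)} {A : Matrix (Fin (N + 1)) (Fin (N + 1)) k}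
    (hA : low l 1 A) (m : ℕ) : low l m (A ^ m) := by
  induction m with
  | zero => rw [pow_zero]; exact low_one l
  | succ m ih => rw [pow_succ]; exact low_mul ih hA

/-- The elementary lower unipotent matrix. -/
def yy {N : ℕ} (k : Type*) [Field k] (i : Fin N) : Matrix (Fin (N + 1)) (Fin (N + 1)) k :=
  Matrix.transvection i.succ i.castSucc 1

lemma yy_coset {N : ℕ} (i : Fin N) : yy k i ∈ doubleCoset (permMat (k := k) (sw i)) := by
  have hne : i.castSucc < i.succ := Fin.castSucc_lt_succ
  let d : Matrix (Fin (N + 1)) (Fin (N + 1)) k :=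
    permMat (sw i) * (Matrix.transvection i.castSucc i.succ (-1) * yy k i)
  have hd : IsUpperTriangular d := by
    intro a c hac
    obtain ⟨a, rfl⟩ := (sw i).surjective a
    simp only [d]
    rw [permMat_mul_apply]
    rw [Fin.lt_def, sw_val] at hac
    by_cases ha : a = i.castSucc
    · subst ha
      rw [Matrix.transvection_mul_apply_same]
      simp only [Fin.val_castSucc, if_true] at hac
      simp only [yy, Matrix.transvection, Matrix.add_apply, Matrix.one_apply, Matrix.single_apply,
        Fin.ext_iff, Fin.val_castSucc, Fin.val_succ]
      by_cases hc : (i : ℕ) = c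
      · simp [hc]
      · have hc' : ¬ ((i : ℕ) + 1 = c) := by omega
        simp [hc, hc']
    · rw [Matrix.transvection_mul_apply_of_ne _ _ _ _ ha]
      have ha' : (a : ℕ) ≠ i := fun e => ha (Fin.ext e)
      simp only [yy, Matrix.transvection, Matrix.add_apply, Matrix.one_apply, Matrix.single_apply,
        Fin.ext_iff, Fin.val_castSucc, Fin.val_succ]
      rw [if_neg ha'] at hac
      have e1 : ¬ ((a : ℕ) = c) := by
        split_ifs at hac <;> omega
      have e2 : ¬ ((i : ℕ) + 1 = a ∧ (i : ℕ) = c) := by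
        split_ifs at hac <;> omega
      rw [if_neg e1, if_neg e2, add_zero]
  have hss : (permMat (sw i) * permMat (sw i) : Matrix (Fin (N + 1)) (Fin (N + 1)) k) = 1 := by
    rw [permMat_mul, sw_sw, permMat_one]
  refine ⟨Matrix.transvection i.castSucc i.succ 1, d, upper_transvection _ _ hne _, hd,
    transvection_det _ _ hne.ne _,
    isUnit_det_mul (permMat_det _) (isUnit_det_mul (transvection_det _ _ hne.ne _)
      (transvection_det _ _ hne.ne' _)), ?_⟩
  simp only [d]
  rw [mul_assoc, ← mul_assoc (permMat (sw i)), hss, one_mul, ← mul_assoc,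
    Matrix.transvection_mul_transvection_same _ _ hne.ne]
  simp

lemma yprod_coset {N : ℕ} (l : List (Fin N)) (hl : l.Nodup) :
    (l.map (yy k)).prod ∈ doubleCoset (permMat (k := k) (wd l)) := by
  induction l with
  | nil =>
    rw [wd_nil, permMat_one]
    exact ⟨1, 1, upper_one, upper_one, by simp, by simp, by simp⟩
  | cons i l ih =>
    rw [List.map_cons, List.prod_cons]
    have := coset_mul_word l [i] (yy k i) (l.map (yy k)).prod (by simpa using hl)
      (by rw [wd_single]; exact yy_coset i) (ih (List.nodup_cons.1 hl).2)
    simpa using this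

lemma yprod_low {N : ℕ} (L l : List (Fin N)) (hl : ∀ i ∈ l, i ∈ L) :
    low L 1 ((l.map (yy k)).prod - 1) := by
  induction l with
  | nil =>
    intro a b h
    simp at h
  | cons i l ih =>
    have ih := ih (fun j hj => hl j (List.mem_cons_of_mem _ hj))
    have hi := hl i List.mem_cons_self
    rw [List.map_cons, List.prod_cons]
    set u := (l.map (yy k)).prod
    have e : yy k i * u - 1 = (yy k i - 1) * u + (u - 1) := by noncomm_ring
    rw [e]
    apply low_add _ ih
    have hu : low L 0 u := by
      have := low_add (low_mono (Nat.zero_le 1) ih) (low_one L)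
      simpa using this
    have hy : low L 1 (yy k i - 1) := by
      intro a b h
      have e2 : yy k i - 1 = Matrix.single i.succ i.castSucc 1 := by
        simp [yy, Matrix.transvection]
      rw [e2] at h
      have hab : i.succ = a ∧ i.castSucc = b := by
        by_contra hne
        exact h (Matrix.single_apply_of_ne _ _ _ _ _ hne)
      obtain ⟨rfl, rfl⟩ := hab
      refine ⟨by simp, ?_⟩
      intro c h1 h2
      simp only [Fin.val_castSucc, Fin.val_succ] at h1 h2
      exact ⟨i, hi, by omega⟩
    exact low_mul hy hu

end Mat2


end Helpers

/-- The case `G = GL_n` of Lusztig's theorem that the map `Φ` from conjugacy classes in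
the Weyl group to unipotent classes is the identity under the identification of both
sides with partitions of `n`: if `w ∈ S_n` has minimal length (number of inversions) in
its conjugacy class and `λ` is its cycle type, then (1) the Bruhat double coset `B P_w B`
contains a unipotent matrix of Jordan type `λ`, and (2) every unipotent matrix `g` in
`B P_w B` satisfies `rank ((g-1)^m) ≥ Σ_j max(λ_j - m, 0)` for all `m ≥ 1`, i.e. the
unipotent class of type `λ` lies in the closure of the class of `g`. -/
theorem unipotent_class_from_weyl_class_GL {k : Type*} [Field k] [IsAlgClosed k]
    {n : ℕ} (hn : 1 ≤ n) (w : Equiv.Perm (Fin n))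
    (hmin : ∀ v : Equiv.Perm (Fin n), IsConj w v → invCount w ≤ invCount v) :
    (∃ u : Matrix (Fin n) (Fin n) k,
      u ∈ doubleCoset (permMat w) ∧ (u - 1) ^ n = 0 ∧
      ∀ m : ℕ, 1 ≤ m → ((u - 1) ^ m).rank = expectedRank w m) ∧
    (∀ g : Matrix (Fin n) (Fin n) k,
      g ∈ doubleCoset (permMat w) → (g - 1) ^ n = 0 →
      ∀ m : ℕ, 1 ≤ m → expectedRank w m ≤ ((g - 1) ^ m).rank) := by
  obtain ⟨N, rfl⟩ : ∃ N, n = N + 1 := ⟨n - 1, by omega⟩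
  classical
  have hshort : invCount w ≤ expectedRank w 1 := by
    obtain ⟨v, hv, hv'⟩ := exists_short_conj w
    exact (hmin v hv).trans hv'
  obtain ⟨l, rfl, hl⟩ := exists_word (invCount w) w le_rfl
  obtain ⟨hnd, hrank⟩ := structure_of_min l (hl.trans hshort)
  have hlow : ∀ g : Matrix (Fin (N + 1)) (Fin (N + 1)) k,
      g ∈ doubleCoset (permMat (wd l)) → ∀ m : ℕ, 1 ≤ m →
      expectedRank (wd l) m ≤ ((g - 1) ^ m).rank := by
    intro g hg m hm
    rw [hrank m hm]
    exact lower_bound l hnd g hg m hm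
  refine ⟨⟨(l.map (yy k)).prod, yprod_coset l hnd, ?_, ?_⟩, fun g hg _ => hlow g hg⟩
  · have hp := low_pow (yprod_low (k := k) l l (fun _ h => h)) (N + 1)
    ext a b
    rw [Matrix.zero_apply]
    by_contra hne
    have := (hp a b hne).1
    have := a.2
    omega
  · intro m hm
    apply le_antisymm _ (hlow _ (yprod_coset l hnd) m hm)
    rw [hrank m hm]
    have hp := low_pow (yprod_low (k := k) l l (fun _ h => h)) m
    apply rank_upper
    intro a c hc
    by_contra hne
    apply hc
    rw [Finset.mem_filter]
    refine ⟨Finset.mem_univ _, ?_⟩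
    obtain ⟨h1, h2⟩ := hp a c hne
    intro r hr
    exact h2 (c + r) (by omega) (by omega)
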